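/- In the quantized enveloping algebra U_q(gl_n), for every integer m ≥ 0 the following identities hold: tr( D^{−1} · ((L⁺)^{−1}L⁻)^m ) = tr( D · (L⁻(L⁺)^{−1})^m ) and tr( D^{−1} · ((L⁻)^{−1}L⁺)^m ) = tr( D · (L⁺(L⁻)^{−1})^m ). -/

import Mathlib

open Matrix

noncomputable section

/-- The `R`-matrix of `U_q(gl_n)` as an `n²×n²` matrix. -/
def Rmat (q : ℂ) (n : ℕ) : Matrix (Fin n × Fin n) (Fin n × Fin n) ℂ :=
  fun p r =>
    (if p = r then (if p.1 = p.2 then q else 1) else 0) +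
      (if r.1 = p.2 ∧ r.2 = p.1 ∧ p.1 < p.2 then q - q⁻¹ else 0)

/-- Generators of `U_q(gl_n)`: a sign (`true` for `+`) and a pair of indices. -/
abbrev GenGL (n : ℕ) := Bool × Fin n × Fin n

/-- The generator `l^±_{ij}` in the free algebra. -/
def gl (n : ℕ) (p : Bool) (i j : Fin n) : FreeAlgebra ℂ (GenGL n) :=
  FreeAlgebra.ι ℂ (p, i, j)

/-- Embedding of an `n×n` matrix into the first tensor leg of `End(ℂ^n)⊗End(ℂ^n)`. -/
def leg1 {n : ℕ} {A : Type*} [Semiring A] (m : Fin n → Fin n → A) :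
    Matrix (Fin n × Fin n) (Fin n × Fin n) A :=
  fun v w => if v.2 = w.2 then m v.1 w.1 else 0

/-- Embedding of an `n×n` matrix into the second tensor leg of `End(ℂ^n)⊗End(ℂ^n)`. -/
def leg2 {n : ℕ} {A : Type*} [Semiring A] (m : Fin n → Fin n → A) :
    Matrix (Fin n × Fin n) (Fin n × Fin n) A :=
  fun v w => if v.1 = w.1 then m v.2 w.2 else 0

/-- The `R`-matrix with entries in the free algebra. -/
def RcGL (q : ℂ) (n : ℕ) : Matrix (Fin n × Fin n) (Fin n × Fin n) (FreeAlgebra ℂ (GenGL n)) :=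
  (Rmat q n).map (algebraMap ℂ (FreeAlgebra ℂ (GenGL n)))

/-- The defining relations of `U_q(gl_n)` in its `RTT` presentation. -/
inductive relGL (q : ℂ) (n : ℕ) :
    FreeAlgebra ℂ (GenGL n) → FreeAlgebra ℂ (GenGL n) → Prop
  | tri_minus {i j : Fin n} : i < j → relGL q n (gl n false i j) 0
  | tri_plus {i j : Fin n} : i < j → relGL q n (gl n true j i) 0
  | diag_mp (i : Fin n) : relGL q n (gl n false i i * gl n true i i) 1
  | diag_pm (i : Fin n) : relGL q n (gl n true i i * gl n false i i) 1
  | rll (p : Bool) (v w : Fin n × Fin n) :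
      relGL q n
        ((RcGL q n * leg1 (gl n p) * leg2 (gl n p)) v w)
        ((leg2 (gl n p) * leg1 (gl n p) * RcGL q n) v w)
  | rll_pm (v w : Fin n × Fin n) :
      relGL q n
        ((RcGL q n * leg1 (gl n true) * leg2 (gl n false)) v w)
        ((leg2 (gl n false) * leg1 (gl n true) * RcGL q n) v w)

/-- The quantized enveloping algebra `U_q(gl_n)` in its `RTT` presentation. -/
abbrev UqGL (q : ℂ) (n : ℕ) := RingQuot (relGL q n)

/-- The generator `l^±_{ij}` of `U_q(gl_n)`. -/
def lG (q : ℂ) (n : ℕ) (p : Bool) (i j : Fin n) : UqGL q n :=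
  RingQuot.mkAlgHom ℂ (relGL q n) (gl n p i j)

/-- The generator matrix `L^± = [l^±_{ij}]`. -/
def LM (q : ℂ) (n : ℕ) (p : Bool) : Matrix (Fin n) (Fin n) (UqGL q n) :=
  fun i j => lG q n p i j

/-- The diagonal matrix `D = diag(q^{n−1}, q^{n−3}, …, q^{−n+1})` over `A`. -/
def Dmat (q : ℂ) (n : ℕ) (A : Type*) [Ring A] [Algebra ℂ A] : Matrix (Fin n) (Fin n) A :=
  Matrix.diagonal fun i => algebraMap ℂ A (q ^ ((n : ℤ) - 1 - 2 * (i : ℤ)))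

/-- The inverse diagonal matrix `D⁻¹`. -/
def Dmatinv (q : ℂ) (n : ℕ) (A : Type*) [Ring A] [Algebra ℂ A] : Matrix (Fin n) (Fin n) A :=
  Matrix.diagonal fun i => algebraMap ℂ A (q ^ (-((n : ℤ) - 1 - 2 * (i : ℤ))))

/-- Quantum trace `tr_q X = tr(D X)`. -/
def trq {n : ℕ} {A : Type*} [Ring A] [Algebra ℂ A] (q : ℂ) (X : Matrix (Fin n) (Fin n) A) : A :=
  Matrix.trace (Dmat q n A * X)

/-- The `q`-number `[k]_q`. -/
def qint (q : ℂ) (k : ℤ) : ℂ := (q ^ k - q ^ (-k)) / (q - q⁻¹)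

end

noncomputable section helpers

open Finset

variable {n : ℕ} {A : Type*} [Ring A] [Algebra ℂ A]

theorem leg1_mul' (X Y : Matrix (Fin n) (Fin n) A) :
    leg1 (X * Y : Matrix (Fin n) (Fin n) A) = leg1 X * leg1 Y := by
  ext ⟨a, c⟩ ⟨b, d⟩
  simp only [leg1, Matrix.mul_apply, Fintype.sum_prod_type]
  by_cases h : c = d
  · subst h; simp
  · simp [h, ite_and]

theorem leg2_mul' (X Y : Matrix (Fin n) (Fin n) A) :
    leg2 (X * Y : Matrix (Fin n) (Fin n) A) = leg2 X * leg2 Y := by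
  ext ⟨a, c⟩ ⟨b, d⟩
  simp only [leg2, Matrix.mul_apply, Fintype.sum_prod_type]
  by_cases h : a = b
  · subst h; simp
  · simp [h]

theorem leg2_one' : leg2 (1 : Matrix (Fin n) (Fin n) A) = 1 := by
  ext ⟨a, c⟩ ⟨b, d⟩
  simp only [leg2, Matrix.one_apply, Prod.mk.injEq]
  by_cases h : a = b <;> simp [h]

theorem leg2_pow' (X : Matrix (Fin n) (Fin n) A) (m : ℕ) :
    leg2 (X ^ m : Matrix (Fin n) (Fin n) A) = leg2 X ^ m := by
  induction m with
  | zero => simp [leg2_one']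
  | succ k ih => rw [pow_succ, pow_succ, leg2_mul', ih]

/-- R over A -/
def RA (q : ℂ) (n : ℕ) (A : Type*) [Ring A] [Algebra ℂ A] :
    Matrix (Fin n × Fin n) (Fin n × Fin n) A :=
  (Rmat q n).map (algebraMap ℂ A)

/-- the diagonal coefficient -/
def kk (q : ℂ) (a b : Fin n) : ℂ := if a = b then q else 1

theorem RA_apply (q : ℂ) (a b c d : Fin n) :
    RA q n A (a, b) (c, d) =
      (if a = c then if b = d then algebraMap ℂ A (kk q a b) else 0 else 0) +
      (if c = b then if d = a then (if a < b then algebraMap ℂ A (q - q⁻¹) else 0) else 0 else 0) := by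
  simp only [RA, Rmat, Matrix.map_apply, kk, map_add, Prod.mk.injEq, ite_and]
  congr 1 <;> split_ifs <;> simp

theorem entry1 (q : ℂ) (X Y : Matrix (Fin n) (Fin n) A) (a b c d : Fin n) :
    (leg2 X * RA q n A * leg1 Y) (a, c) (b, d) =
      kk q a d • (X c d * Y a b) +
      (if d = a then (q - q⁻¹) • ∑ e, (if a < e then X c e * Y e b else 0) else 0) := by
  simp only [Matrix.mul_apply, Fintype.sum_prod_type, leg1, leg2, RA_apply, mul_add, add_mul,
    Finset.sum_add_distrib, ite_mul, mul_ite, mul_zero, zero_mul, Finset.sum_ite_eq,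
    Finset.sum_ite_eq', Finset.mem_univ, if_true, Finset.sum_ite_irrel, Finset.sum_const_zero]
  congr 1
  · rw [← Algebra.commutes, ← Algebra.smul_def, smul_mul_assoc]
  · split_ifs with h
    · rw [Finset.smul_sum]
      refine Finset.sum_congr rfl fun e _ => ?_
      split_ifs
      · rw [← Algebra.commutes, ← Algebra.smul_def, smul_mul_assoc]
      · simp
    · rfl

theorem entry2 (q : ℂ) (X Y : Matrix (Fin n) (Fin n) A) (a b c d : Fin n) :
    (RA q n A * leg1 Y * leg2 X) (a, c) (b, d) =
      kk q a c • (Y a b * X c d) +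
      (if a < c then (q - q⁻¹) • (Y c b * X a d) else 0) := by
  simp only [Matrix.mul_apply, Fintype.sum_prod_type, leg1, leg2, RA_apply, mul_add, add_mul,
    Finset.sum_add_distrib, ite_mul, mul_ite, mul_zero, zero_mul, Finset.sum_ite_eq,
    Finset.sum_ite_eq', Finset.mem_univ, if_true, Finset.sum_ite_irrel, Finset.sum_const_zero]
  simp only [← Algebra.smul_def, smul_mul_assoc]

theorem entry3 (q : ℂ) (X Y : Matrix (Fin n) (Fin n) A) (a b c d : Fin n) :
    (leg1 Y * RA q n A * leg2 X) (a, c) (b, d) =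
      kk q b c • (Y a b * X c d) +
      (if b = c then (q - q⁻¹) • ∑ e, (if e < b then Y a e * X e d else 0) else 0) := by
  simp only [Matrix.mul_apply, Fintype.sum_prod_type, leg1, leg2, RA_apply, mul_add, add_mul,
    Finset.sum_add_distrib, ite_mul, mul_ite, mul_zero, zero_mul, Finset.sum_ite_eq,
    Finset.sum_ite_eq', Finset.mem_univ, if_true, Finset.sum_ite_irrel, Finset.sum_const_zero]
  congr 1
  · rw [← Algebra.commutes, ← Algebra.smul_def, smul_mul_assoc]
  · split_ifs with h
    · subst h
      rw [Finset.smul_sum]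
      refine Finset.sum_congr rfl fun e _ => ?_
      split_ifs
      · rw [← Algebra.commutes, ← Algebra.smul_def, smul_mul_assoc]
      · simp
    · rfl

/-- weights of the inverse of D -/
def ww (q : ℂ) (n : ℕ) (i : ℕ) : ℂ := q ^ (-((n : ℤ) - 1 - 2 * (i : ℤ)))

/-- weights of `D` normalised -/
def tt (q : ℂ) (i : ℕ) : ℂ := q ^ (-1 - 2 * (i : ℤ))

theorem tt_nat (q : ℂ) (hq0 : q ≠ 0) (e N : ℕ) (he : e < N) :
    q * tt q e + (q - q⁻¹) * ∑ c ∈ range N, (if c < e then tt q c else 0) = 1 := by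
  have h1 : ∑ c ∈ range N, (if c < e then tt q c else 0) = ∑ c ∈ range e, tt q c := by
    rw [← Finset.sum_filter]
    congr 1
    ext x; simp; omega
  rw [h1]
  clear h1 he
  induction e with
  | zero => simp [tt, hq0]
  | succ k ih =>
    rw [Finset.sum_range_succ]
    have : tt q (k + 1) = tt q k * q⁻¹ * q⁻¹ := by
      simp only [tt]
      rw [← zpow_sub_one₀ hq0, ← zpow_sub_one₀ hq0]
      congr 1; push_cast; ring
    rw [this]
    rw [← ih]
    field_simp
    ring

theorem ww_nat (q : ℂ) (hq0 : q ≠ 0) (M e N : ℕ) (he : e < N) :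
    q * ww q M e + (q - q⁻¹) * ∑ c ∈ range N, (if e < c then ww q M c else 0)
      = q ^ (2 * (N : ℤ) - M) := by
  induction N with
  | zero => omega
  | succ k ih =>
    rw [Finset.sum_range_succ]
    rcases Nat.lt_succ_iff_lt_or_eq.mp he with h | h
    · rw [mul_add, ← add_assoc, ih h, if_pos h]
      simp only [ww]
      have h1 : q ^ (-((M : ℤ) - 1 - 2 * (k : ℤ))) = q ^ (2 * (k : ℤ) - M) * q := by
        rw [← zpow_add_one₀ hq0]; congr 1; ring
      have h2 : q ^ (2 * ((k + 1 : ℕ) : ℤ) - M) = q ^ (2 * (k : ℤ) - M) * q * q := by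
        rw [← zpow_add_one₀ hq0, ← zpow_add_one₀ hq0]; congr 1; push_cast; ring
      rw [h1, h2]
      field_simp
      ring
    · subst h
      have : ∑ c ∈ range e, (if e < c then ww q M c else 0) = 0 := by
        apply Finset.sum_eq_zero
        intro c hc
        rw [if_neg]; simp at hc; omega
      rw [this]
      simp only [lt_irrefl, if_false, add_zero, mul_zero, ww]
      rw [mul_comm, ← zpow_add_one₀ hq0]; congr 1; push_cast; ring

theorem tt_fin (q : ℂ) (hq0 : q ≠ 0) (e : Fin n) :
    q * tt q e + (q - q⁻¹) * ∑ c : Fin n, (if c < e then tt q c else 0) = 1 := by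
  rw [← tt_nat q hq0 e n e.2, ← Fin.sum_univ_eq_sum_range (fun c => if c < (e : ℕ) then tt q c else 0)]
  rfl

theorem ww_fin (q : ℂ) (hq0 : q ≠ 0) (e : Fin n) :
    q * ww q n e + (q - q⁻¹) * ∑ c : Fin n, (if e < c then ww q n c else 0) = q ^ (n : ℤ) := by
  have := ww_nat q hq0 n e n e.2
  rw [← Fin.sum_univ_eq_sum_range (fun c => if (e : ℕ) < c then ww q n c else 0)] at this
  rw [show (2 * (n : ℤ) - n) = n by ring] at this
  exact this

/-- twisted sum -/
def uu (q : ℂ) (L Li : Matrix (Fin n) (Fin n) A) (f a : Fin n) : A :=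
  ∑ g : Fin n, ww q n g • (Li g a * L f g)

/-- swapping lemma: weights `w` below. -/
theorem swap_sum (w : Fin n → ℂ) (r s : ℂ) (c : ℂ) (F : Fin n → A)
    (P : Fin n → Fin n → Prop) [∀ a b, Decidable (P a b)]
    (hw : ∀ e, r * w e + s * ∑ g, (if P e g then w g else 0) = c) :
    ∑ g, w g • (r • F g + s • ∑ e, (if P e g then F e else 0)) = c • ∑ e, F e := by
  simp only [smul_add, Finset.sum_add_distrib, Finset.smul_sum]
  rw [Finset.sum_comm, ← Finset.sum_add_distrib]
  refine Finset.sum_congr rfl fun e _ => ?_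
  rw [← hw e, add_smul, mul_comm r, mul_smul, Finset.mul_sum, Finset.sum_smul]
  congr 1
  refine Finset.sum_congr rfl fun g _ => ?_
  split_ifs
  · rw [smul_smul, mul_comm]
  · simp

theorem uu_rel (q : ℂ) (hq0 : q ≠ 0) (L Li : Matrix (Fin n) (Fin n) A) (h1 : L * Li = 1)
    (h : leg2 Li * RA q n A * leg1 L = leg1 L * RA q n A * leg2 Li) (a d : Fin n) :
    kk q a d • uu q L Li a d +
      (if d = a then (q - q⁻¹) • ∑ e, (if a < e then uu q L Li e e else 0) else 0)
     = if a = d then algebraMap ℂ A (q ^ (n : ℤ)) else 0 := by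
  have key : ∑ g : Fin n, ww q n g • (leg2 Li * RA q n A * leg1 L) (a, g) (g, d)
      = ∑ g : Fin n, ww q n g • (leg1 L * RA q n A * leg2 Li) (a, g) (g, d) := by rw [h]
  simp only [entry1, entry3, if_true] at key
  have hR := swap_sum (A := A) (fun g : Fin n => ww q n g) q (q - q⁻¹) (q ^ (n : ℤ))
    (fun e => L a e * Li e d) (fun e g => e < g) (fun e => ww_fin q hq0 e)
  have hk : ∀ g : Fin n, kk q g g = q := fun g => by simp [kk]
  simp only [hk] at key
  rw [hR, ← Matrix.mul_apply, h1, Matrix.one_apply] at key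
  rw [smul_ite, smul_zero, ← Algebra.algebraMap_eq_smul_one] at key
  rw [← key]
  simp only [smul_add, Finset.sum_add_distrib, uu]
  congr 1
  · rw [Finset.smul_sum]
    refine Finset.sum_congr rfl fun g _ => ?_
    rw [smul_comm]
  · split_ifs
    · simp only [Finset.smul_sum]
      rw [Finset.sum_comm]
      refine Finset.sum_congr rfl fun e _ => ?_
      split_ifs
      · rw [Finset.smul_sum]
        refine Finset.sum_congr rfl fun g _ => ?_
        rw [smul_comm]
      · simp
    · simp

theorem uu_eq (q : ℂ) (hq0 : q ≠ 0) (L Li : Matrix (Fin n) (Fin n) A) (h1 : L * Li = 1)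
    (h : leg2 Li * RA q n A * leg1 L = leg1 L * RA q n A * leg2 Li) (a d : Fin n) :
    uu q L Li a d = if a = d then algebraMap ℂ A (ww q n a) else 0 := by
  split_ifs with had
  · subst had
    induction a using (wellFounded_gt (α := Fin n)).induction with
    | _ a ih =>
      have := uu_rel q hq0 L Li h1 h a a
      simp only [if_true, kk] at this
      have e1 : ∑ e, (if a < e then uu q L Li e e else 0)
          = algebraMap ℂ A (∑ e : Fin n, (if a < e then ww q n e else 0)) := by
        rw [map_sum]
        refine Finset.sum_congr rfl fun e _ => ?_
        split_ifs with hh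
        · exact ih e hh
        · simp
      rw [e1, ← ww_fin q hq0 a, map_add, map_mul, map_mul, Algebra.smul_def (q - q⁻¹),
        add_left_inj, ← Algebra.smul_def] at this
      exact smul_right_injective A hq0 this
  · have := uu_rel q hq0 L Li h1 h a d
    rw [if_neg had, if_neg (fun h => had h.symm), kk, if_neg had] at this
    simpa using this

theorem main_lemma (q : ℂ) (hq0 : q ≠ 0) (L Li X : Matrix (Fin n) (Fin n) A) (h1 : L * Li = 1)
    (h : leg2 Li * RA q n A * leg1 L = leg1 L * RA q n A * leg2 Li)
    (hX : leg2 X * RA q n A * leg1 L = RA q n A * leg1 L * leg2 X) :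
    Matrix.trace (Dmatinv q n A * (Li * X * L)) = Matrix.trace (Dmat q n A * X) := by
  have hXL : ∀ c b, (X * L) c b = ∑ a : Fin n, tt q a • (kk q a c • (L a b * X c a) +
      (if a < c then (q - q⁻¹) • (L c b * X a a) else 0)) := by
    intro c b
    have key : ∑ a : Fin n, tt q a • (leg2 X * RA q n A * leg1 L) (a, c) (b, a)
      = ∑ a : Fin n, tt q a • (RA q n A * leg1 L * leg2 X) (a, c) (b, a) := by rw [hX]
    simp only [entry1, entry2, if_true] at key
    have hk : ∀ g : Fin n, kk q g g = q := fun g => by simp [kk]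
    simp only [hk] at key
    have hR := swap_sum (A := A) (fun g : Fin n => tt q g) q (q - q⁻¹) 1
      (fun e => X c e * L e b) (fun e g => g < e) (fun e => tt_fin q hq0 e)
    rw [hR, one_smul, ← Matrix.mul_apply] at key
    exact key
  have hL : Matrix.trace (Dmatinv q n A * (Li * X * L)) =
      ∑ b : Fin n, ∑ c : Fin n, ww q n b • (Li b c * (X * L) c b) := by
    simp only [Matrix.trace, Matrix.diag_apply, Dmatinv, Matrix.diagonal_mul, Matrix.mul_assoc Li]
    refine Finset.sum_congr rfl fun b _ => ?_
    rw [Matrix.mul_apply, ← Algebra.smul_def, Finset.smul_sum]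
    rfl
  have hRt : Matrix.trace (Dmat q n A * X) = ∑ a : Fin n, (tt q a * q ^ (n : ℤ)) • X a a := by
    simp only [Matrix.trace, Matrix.diag_apply, Dmat, Matrix.diagonal_mul]
    refine Finset.sum_congr rfl fun a _ => ?_
    rw [← Algebra.smul_def, tt, ← zpow_add₀ hq0]
    congr 2; ring
  rw [hL, hRt]
  have hmid : ∀ a c : Fin n, ∑ b : Fin n, ww q n b • (Li b c * (tt q a • (kk q a c • (L a b * X c a) +
      (if a < c then (q - q⁻¹) • (L c b * X a a) else 0)))) =
      tt q a • (kk q a c • (uu q L Li a c * X c a) +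
        (if a < c then (q - q⁻¹) • (uu q L Li c c * X a a) else 0)) := by
    intro a c
    simp only [uu, Finset.sum_mul, Finset.smul_sum]
    split_ifs
    · simp only [Finset.smul_sum, ← Finset.sum_add_distrib]
      refine Finset.sum_congr rfl fun b _ => ?_
      simp only [mul_smul_comm, mul_add, smul_add, smul_mul_assoc, mul_assoc]
      simp only [smul_smul]
      congr 2 <;> ring
    · simp only [add_zero, Finset.smul_sum]
      refine Finset.sum_congr rfl fun b _ => ?_
      simp only [mul_smul_comm, smul_mul_assoc, mul_assoc]
      simp only [smul_smul]
      congr 1; ring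
  simp only [hXL, Finset.mul_sum, Finset.smul_sum]
  rw [Finset.sum_comm]
  rw [Finset.sum_congr rfl fun c _ => Finset.sum_comm]
  rw [Finset.sum_comm]
  simp only [hmid, uu_eq q hq0 L Li h1 h, if_true]
  refine Finset.sum_congr rfl fun a _ => ?_
  rw [← Finset.smul_sum, mul_smul, ← ww_fin q hq0 a]
  congr 1
  rw [Finset.sum_add_distrib, add_smul]
  congr 1
  · rw [Finset.sum_eq_single a]
    · simp [kk, ← Algebra.smul_def, smul_smul]
    · intro c _ hc
      simp [hc.symm]
    · simp
  · rw [Finset.mul_sum, Finset.sum_smul]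
    refine Finset.sum_congr rfl fun c _ => ?_
    split_ifs
    · rw [← Algebra.smul_def, smul_smul]
    · simp

theorem conj_pow_mat (L Li Y : Matrix (Fin n) (Fin n) A) (h1 : L * Li = 1) (h2 : Li * L = 1) (m : ℕ) :
    (Li * Y * L) ^ m = Li * Y ^ m * L := by
  induction m with
  | zero => simp [h2]
  | succ k ih =>
    rw [pow_succ, ih, pow_succ]
    calc Li * Y ^ k * L * (Li * Y * L) = Li * Y ^ k * (L * Li) * Y * L := by
          simp only [Matrix.mul_assoc]
      _ = _ := by rw [h1]; simp only [Matrix.mul_assoc, Matrix.one_mul]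

theorem Uq_rel (q : ℂ) (p p' : Bool) 
    (hr : ∀ v w, relGL q n
        ((RcGL q n * leg1 (gl n p) * leg2 (gl n p')) v w)
        ((leg2 (gl n p') * leg1 (gl n p) * RcGL q n) v w)) :
    RA q n (UqGL q n) * leg1 (LM q n p) * leg2 (LM q n p')
      = leg2 (LM q n p') * leg1 (LM q n p) * RA q n (UqGL q n) := by
  let φ := (RingQuot.mkAlgHom ℂ (relGL q n))
  have e1 : ∀ p, leg1 (LM q n p) = (leg1 (gl n p)).map φ := by
    intro p; ext v w; simp only [leg1, Matrix.map_apply]; split_ifs <;> simp [LM, lG, φ]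
  have e2 : ∀ p, leg2 (LM q n p) = (leg2 (gl n p)).map φ := by
    intro p; ext v w; simp only [leg2, Matrix.map_apply]; split_ifs <;> simp [LM, lG, φ]
  have e3 : RA q n (UqGL q n) = (RcGL q n).map φ := by
    ext v w; simp only [RA, RcGL, Matrix.map_apply]; exact (φ.commutes _).symm
  rw [e1, e2, e3, ← Matrix.map_mul, ← Matrix.map_mul, ← Matrix.map_mul, ← Matrix.map_mul]
  ext v w
  exact RingQuot.mkAlgHom_rel ℂ (hr v w)

end helpers

/-- In `U_q(gl_n)`, for every `m ≥ 0`: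
`tr(D⁻¹((L⁺)⁻¹L⁻)^m) = tr(D(L⁻(L⁺)⁻¹)^m)` and
`tr(D⁻¹((L⁻)⁻¹L⁺)^m) = tr(D(L⁺(L⁻)⁻¹)^m)`. -/
theorem stmt_15 (n : ℕ) (hn : 1 ≤ n) (q : ℂ) (hq0 : q ≠ 0)
    (hq : ∀ k : ℕ, k ≠ 0 → q ^ k ≠ 1)
    (Lpinv Lminv : Matrix (Fin n) (Fin n) (UqGL q n))
    (hLp1 : LM q n true * Lpinv = 1) (hLp2 : Lpinv * LM q n true = 1)
    (hLm1 : LM q n false * Lminv = 1) (hLm2 : Lminv * LM q n false = 1)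
    (m : ℕ) :
    Matrix.trace (Dmatinv q n (UqGL q n) * (Lpinv * LM q n false) ^ m) =
        Matrix.trace (Dmat q n (UqGL q n) * (LM q n false * Lpinv) ^ m) ∧
      Matrix.trace (Dmatinv q n (UqGL q n) * (Lminv * LM q n true) ^ m) =
        Matrix.trace (Dmat q n (UqGL q n) * (LM q n true * Lminv) ^ m) := by
  have hpp := Uq_rel (n := n) q true true (fun v w => relGL.rll (q := q) true v w)
  have hpm := Uq_rel (n := n) q true false (fun v w => relGL.rll_pm (q := q) v w)
  set Lp := LM q n true
  set Lm := LM q n false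
  set R := RA q n (UqGL q n)
  have a1 : leg2 Lp * leg2 Lpinv = 1 := by rw [← leg2_mul', hLp1, leg2_one']
  have a2 : leg2 Lpinv * leg2 Lp = 1 := by rw [← leg2_mul', hLp2, leg2_one']
  have b1 : leg2 Lm * leg2 Lminv = 1 := by rw [← leg2_mul', hLm1, leg2_one']
  have b2 : leg2 Lminv * leg2 Lm = 1 := by rw [← leg2_mul', hLm2, leg2_one']
  have h : leg2 Lpinv * R * leg1 Lp = leg1 Lp * R * leg2 Lpinv := by
    calc leg2 Lpinv * R * leg1 Lp
        = leg2 Lpinv * (R * leg1 Lp * leg2 Lp) * leg2 Lpinv := by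
          simp only [Matrix.mul_assoc, a1, Matrix.mul_one]
      _ = (leg2 Lpinv * leg2 Lp) * leg1 Lp * R * leg2 Lpinv := by
          rw [hpp]; simp only [Matrix.mul_assoc]
      _ = _ := by rw [a2, Matrix.one_mul]
  have c1 : Commute (leg2 (Lm * Lpinv : Matrix (Fin n) (Fin n) (UqGL q n))) (R * leg1 Lp) := by
    change _ * _ = _ * _
    rw [leg2_mul']
    calc leg2 Lm * leg2 Lpinv * (R * leg1 Lp) = leg2 Lm * (leg2 Lpinv * R * leg1 Lp) := by
          simp only [Matrix.mul_assoc]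
      _ = (leg2 Lm * leg1 Lp * R) * leg2 Lpinv := by rw [h]; simp only [Matrix.mul_assoc]
      _ = _ := by rw [← hpm]; simp only [Matrix.mul_assoc]
  have d1 : (Lm * Lpinv) * (Lp * Lminv) = 1 := by
    rw [Matrix.mul_assoc, ← Matrix.mul_assoc Lpinv, hLp2, Matrix.one_mul, hLm1]
  have d2 : (Lp * Lminv) * (Lm * Lpinv) = 1 := by
    rw [Matrix.mul_assoc, ← Matrix.mul_assoc Lminv, hLm2, Matrix.one_mul, hLp1]
  have c2 : Commute (leg2 (Lp * Lminv : Matrix (Fin n) (Fin n) (UqGL q n))) (R * leg1 Lp) := by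
    let u : (Matrix (Fin n × Fin n) (Fin n × Fin n) (UqGL q n))ˣ :=
      ⟨leg2 (Lm * Lpinv : Matrix (Fin n) (Fin n) (UqGL q n)),
        leg2 (Lp * Lminv : Matrix (Fin n) (Fin n) (UqGL q n)),
        by rw [← leg2_mul', d1, leg2_one'], by rw [← leg2_mul', d2, leg2_one']⟩
    have c1' : Commute (u : Matrix (Fin n × Fin n) (Fin n × Fin n) (UqGL q n)) (R * leg1 Lp) := c1
    exact c1'.units_inv_left
  have fin : ∀ Y : Matrix (Fin n) (Fin n) (UqGL q n), Commute (leg2 Y) (R * leg1 Lp) →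
      Matrix.trace (Dmatinv q n (UqGL q n) * (Lpinv * Y * Lp) ^ m) =
        Matrix.trace (Dmat q n (UqGL q n) * Y ^ m) := by
    intro Y hY
    rw [conj_pow_mat Lp Lpinv Y hLp1 hLp2]
    refine main_lemma q hq0 Lp Lpinv _ hLp1 h ?_
    rw [leg2_pow', Matrix.mul_assoc]
    exact hY.pow_left m
  constructor
  · rw [← fin _ c1]
    rw [Matrix.mul_assoc, Matrix.mul_assoc Lm, hLp2, Matrix.mul_one]
  · rw [← fin _ c2]
    rw [← Matrix.mul_assoc Lpinv, hLp2, Matrix.one_mul]
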